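/- Let f : ℝ² → ℂ be a compactly supported integrable function. If there exists a nonempty open interval I ⊂ (0,∞) such that the Fourier transform of f vanishes on the set {sω : s ∈ I, ω ∈ 𝕊¹} (equivalently, ∫_{ℝ²} f(x) e^{-s x·ω} dx = 0 for all s ∈ I and all unit vectors ω, after analytic continuation), then f ≡ 0 almost everywhere. -/

import Mathlib

open MeasureTheory Set
open scoped RealInnerProductSpace

/-!
Multiplying `f` by an exponential translates its Laplace transform, so one may assume that the
transform vanishes near `0`. Along the line through `0` in a direction `η` it extends to an entire
function of one complex variable, because `f` has compact support. That function vanishes at the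
real points near `0`, hence everywhere, and its value at `2πi` is the Fourier transform of `f`
at `η`. So the Fourier transform of `f` is zero, and `f` vanishes almost everywhere.
-/

theorem integrable_smul_of_continuous_of_hasCompactSupport {X 𝕜 E : Type*} [TopologicalSpace X]
    [MeasurableSpace X] [OpensMeasurableSpace X] {μ : Measure X} [NormedRing 𝕜]
    [SecondCountableTopologyEither X 𝕜] [NormedAddCommGroup E] [Module 𝕜 E] [IsBoundedSMul 𝕜 E]
    {f : X → E} (hf : Integrable f μ) (hsupp : HasCompactSupport f) {g : X → 𝕜}
    (hg : Continuous g) : Integrable (fun x ↦ g x • f x) μ := by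
  obtain ⟨C, hC⟩ := hsupp.isCompact.exists_bound_of_continuousOn hg.continuousOn
  refine (integrableOn_iff_integrable_of_support_subset (s := tsupport f) ?_).1 ?_
  · exact (Function.support_smul_subset_right g f).trans (subset_tsupport f)
  · exact hf.integrableOn.bdd_smul C hg.aestronglyMeasurable
      (ae_restrict_of_forall_mem (isClosed_tsupport f).measurableSet hC)

section Annulus

variable {V : Type*} [NormedAddCommGroup V] [NormedSpace ℝ V] {a b : ℝ}

theorem nonempty_norm_preimage_Ioo [Nontrivial V] (ha : 0 ≤ a) (hab : a < b) :
    (norm ⁻¹' Ioo a b : Set V).Nonempty := by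
  obtain ⟨c, hc⟩ := nonempty_Ioo.2 hab
  obtain ⟨ξ, rfl⟩ := exists_norm_eq V (ha.trans hc.1.le)
  exact ⟨ξ, hc⟩

theorem forall_mem_norm_preimage_Ioo_of_forall_smul_unit (ha : 0 ≤ a) {p : V → Prop}
    (h : ∀ s ∈ Ioo a b, ∀ ω : V, ‖ω‖ = 1 → p (s • ω)) : ∀ ξ ∈ norm ⁻¹' Ioo a b, p ξ := by
  intro ξ hξ
  have norm_pos : 0 < ‖ξ‖ := ha.trans_lt hξ.1
  have unit : ‖‖ξ‖⁻¹ • ξ‖ = 1 := norm_smul_inv_norm (norm_pos_iff.1 norm_pos)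
  simpa only [smul_inv_smul₀ norm_pos.ne'] using h ‖ξ‖ hξ (‖ξ‖⁻¹ • ξ) unit

end Annulus

section EntireFunction

open Filter Topology

variable {E : Type*} [NormedAddCommGroup E] [NormedSpace ℂ E]

theorem eq_zero_of_differentiable_of_eventually_ofReal_eq_zero [CompleteSpace E] {F : ℂ → E}
    (hF : Differentiable ℂ F) {c : ℝ} (h : ∀ᶠ t : ℝ in 𝓝 c, F t = 0) : F = 0 := by
  have hF_analytic : AnalyticOnNhd ℂ F univ := fun z _ ↦ hF.analyticAt z
  have tendsto_ofReal : Tendsto Complex.ofReal (𝓝[≠] c) (𝓝[≠] (c : ℂ)) :=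
    Complex.ofRealCLM.hasDerivAt.tendsto_nhdsNE (by simp)
  exact hF_analytic.eq_of_frequently_eq analyticOnNhd_const
    (tendsto_ofReal.frequently (h.filter_mono nhdsWithin_le_nhds).frequently)

theorem norm_cexp_mul_le {z w : ℂ} {r R : ℝ} (hz : ‖z‖ ≤ r) (hw : ‖w‖ ≤ R) :
    ‖Complex.exp (z * w)‖ ≤ Real.exp (r * R) :=
  calc ‖Complex.exp (z * w)‖ ≤ Real.exp ‖z * w‖ := Complex.norm_exp_le_exp_norm _
    _ ≤ Real.exp (r * R) := by
      rw [norm_mul]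
      have : 0 ≤ r := (norm_nonneg z).trans hz
      gcongr

theorem differentiable_integral_cexp_mul_smul {α : Type*} [MeasurableSpace α] {μ : Measure α}
    {f : α → E} (hf : Integrable f μ) {φ : α → ℂ} (hφ : AEStronglyMeasurable φ μ) {R : ℝ}
    (hφ_le : ∀ᵐ x ∂μ, ‖φ x‖ ≤ R) :
    Differentiable ℂ fun z ↦ ∫ x, Complex.exp (z * φ x) • f x ∂μ := by
  intro z₀
  have hexp_meas (z : ℂ) : AEStronglyMeasurable (fun x ↦ Complex.exp (z * φ x)) μ :=
    Complex.continuous_exp.comp_aestronglyMeasurable (hφ.const_mul z)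
  have hexp_integrable : Integrable (fun x ↦ Complex.exp (z₀ * φ x) • f x) μ :=
    hf.bdd_smul _ (hexp_meas z₀) (hφ_le.mono fun x hx ↦ norm_cexp_mul_le le_rfl hx)
  have hderiv_le : ∀ᵐ x ∂μ, ∀ z ∈ Metric.ball z₀ 1,
      ‖(Complex.exp (z * φ x) * φ x) • f x‖ ≤ Real.exp ((‖z₀‖ + 1) * R) * R * ‖f x‖ := by
    filter_upwards [hφ_le] with x hx z hz
    have hz_le : ‖z‖ ≤ ‖z₀‖ + 1 := (norm_lt_of_mem_ball hz).le
    rw [norm_smul, norm_mul]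
    gcongr
    exact norm_cexp_mul_le hz_le hx
  have hderiv (x : α) (z : ℂ) : HasDerivAt (fun z ↦ Complex.exp (z * φ x) • f x)
      ((Complex.exp (z * φ x) * φ x) • f x) z :=
    (hasDerivAt_mul_const (φ x)).cexp.smul_const (f x)
  exact (hasDerivAt_integral_of_dominated_loc_of_deriv_le (Metric.ball_mem_nhds z₀ one_pos)
    (.of_forall fun z ↦ (hexp_meas z).smul hf.1) hexp_integrable
    (((hexp_meas z₀).mul hφ).smul hf.1) hderiv_le (hf.norm.const_mul _)
    (.of_forall fun x z _ ↦ hderiv x z)).2.differentiableAt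

theorem differentiable_integral_cexp_mul_smul_of_hasCompactSupport {X : Type*}
    [TopologicalSpace X] [MeasurableSpace X] [OpensMeasurableSpace X] {μ : Measure X} {f : X → E}
    (hf : Integrable f μ) (hsupp : HasCompactSupport f) {φ : X → ℂ} (hφ : Continuous φ) :
    Differentiable ℂ fun z ↦ ∫ x, Complex.exp (z * φ x) • f x ∂μ := by
  obtain ⟨R, hR⟩ := hsupp.isCompact.exists_bound_of_continuousOn hφ.continuousOn
  have integral_tsupport (z : ℂ) : ∫ x in tsupport f, Complex.exp (z * φ x) • f x ∂μ =
      ∫ x, Complex.exp (z * φ x) • f x ∂μ :=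
    setIntegral_eq_integral_of_forall_compl_eq_zero fun x hx ↦ by
      rw [image_eq_zero_of_notMem_tsupport hx, smul_zero]
  simp only [← integral_tsupport]
  exact differentiable_integral_cexp_mul_smul hf.integrableOn hφ.aestronglyMeasurable
    (ae_restrict_of_forall_mem (isClosed_tsupport f).measurableSet hR)

end EntireFunction

section LaplaceTransform

open FourierTransform Topology

variable {V E : Type*} [NormedAddCommGroup V] [InnerProductSpace ℝ V] [FiniteDimensional ℝ V]
  [MeasurableSpace V] [BorelSpace V] [NormedAddCommGroup E] [NormedSpace ℂ E]

/-- The two-sided Laplace transform `ξ ↦ ∫ e^{-⟪x, ξ⟫} f(x) dx` at real frequencies. As a Bochner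
integral, it takes the value `0` wherever the integrand is not integrable. -/
noncomputable def laplaceTransform (f : V → E) (ξ : V) : E :=
  ∫ x, Complex.exp (-(⟪x, ξ⟫ : ℂ)) • f x

theorem laplaceTransform_cexp_neg_inner_smul (f : V → E) (ξ₀ ξ : V) :
    laplaceTransform (fun x ↦ Complex.exp (-(⟪x, ξ₀⟫ : ℂ)) • f x) ξ =
      laplaceTransform f (ξ + ξ₀) := by
  simp only [laplaceTransform, smul_smul, ← Complex.exp_add, inner_add_right, Complex.ofReal_add,
    neg_add]

variable [CompleteSpace E] {f : V → E}

theorem integral_fourier_schwartzMap_smul_eq (φ : SchwartzMap V ℂ) (hf : Integrable f) :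
    ∫ ξ, 𝓕 φ ξ • f ξ = ∫ x, φ x • 𝓕 f x := by
  simpa using! VectorFourier.integral_fourierIntegral_smul_eq_flip (L := innerₗ V)
    Real.continuous_fourierChar continuous_inner φ.integrable hf

theorem ae_eq_zero_of_fourier_eq_zero (hf : Integrable f) (h : 𝓕 f = 0) : f =ᵐ[volume] 0 := by
  refine ae_eq_zero_of_integral_contDiff_smul_eq_zero hf.locallyIntegrable
    fun g hg hg_supp ↦ ?_
  have hg_supp' : HasCompactSupport (Complex.ofRealCLM ∘ g) := hg_supp.comp_left rfl
  let φ : SchwartzMap V ℂ := hg_supp'.toSchwartzMap (Complex.ofRealCLM.contDiff.comp hg)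
  calc ∫ x, g x • f x = ∫ x, 𝓕 (𝓕⁻ φ) x • f x := by
        simp [φ, FourierTransform.fourier_fourierInv_eq]
    _ = ∫ ξ, (𝓕⁻ φ) ξ • 𝓕 f ξ := integral_fourier_schwartzMap_smul_eq _ hf
    _ = 0 := by simp [h]

theorem fourier_eq_zero_of_eventually_laplaceTransform_eq_zero (hf : Integrable f)
    (hsupp : HasCompactSupport f) (h : ∀ᶠ ξ in 𝓝 0, laplaceTransform f ξ = 0) : 𝓕 f = 0 := by
  ext η
  have hφ : Continuous fun x : V ↦ -(⟪x, η⟫ : ℂ) := by fun_prop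
  have vanish_real : ∀ᶠ t : ℝ in 𝓝 0, ∫ x, Complex.exp (t * -(⟪x, η⟫ : ℂ)) • f x = 0 := by
    have tendsto_line : Filter.Tendsto (fun t : ℝ ↦ t • η) (𝓝 0) (𝓝 0) :=
      Continuous.tendsto' (by fun_prop) _ _ (zero_smul ℝ η)
    filter_upwards [tendsto_line.eventually h] with t ht
    simpa [laplaceTransform, inner_smul_right] using ht
  have vanish_complex := eq_zero_of_differentiable_of_eventually_ofReal_eq_zero
    (differentiable_integral_cexp_mul_smul_of_hasCompactSupport hf hsupp hφ) vanish_real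
  calc 𝓕 f η = ∫ x, Complex.exp (2 * Real.pi * Complex.I * -(⟪x, η⟫ : ℂ)) • f x := by
        rw [Real.fourier_eq']
        congr! 4
        push_cast
        ring
    _ = 0 := congrFun vanish_complex (2 * Real.pi * Complex.I)

theorem stmt3_general (hf : Integrable f) (hsupp : HasCompactSupport f) {U : Set V}
    (hU : IsOpen U) (hU_nonempty : U.Nonempty)
    (h : ∀ ξ ∈ U, laplaceTransform f ξ = 0) : f =ᵐ[volume] 0 := by
  obtain ⟨ξ₀, hξ₀⟩ := hU_nonempty
  let g : V → E := fun x ↦ Complex.exp (-(⟪x, ξ₀⟫ : ℂ)) • f x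
  have hg : Integrable g :=
    integrable_smul_of_continuous_of_hasCompactSupport hf hsupp (by fun_prop)
  have hg_laplace : ∀ᶠ ξ in 𝓝 0, laplaceTransform g ξ = 0 := by
    have tendsto_add : Filter.Tendsto (fun ξ : V ↦ ξ + ξ₀) (𝓝 0) (𝓝 ξ₀) :=
      Continuous.tendsto' (by fun_prop) _ _ (zero_add ξ₀)
    filter_upwards [tendsto_add (hU.mem_nhds hξ₀)] with ξ hξ
    exact (laplaceTransform_cexp_neg_inner_smul f ξ₀ ξ).trans (h (ξ + ξ₀) hξ)
  have hg_zero : g =ᵐ[volume] 0 := ae_eq_zero_of_fourier_eq_zero hg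
    (fourier_eq_zero_of_eventually_laplaceTransform_eq_zero hg hsupp.smul_left hg_laplace)
  filter_upwards [hg_zero] with x hx
  exact (smul_eq_zero_iff_right (Complex.exp_ne_zero _)).1 hx

end LaplaceTransform

/-- If a compactly supported integrable `f : ℝ² → ℂ` satisfies
`∫ f(x) e^{-s x·ω} dx = 0` for all `s` in a nonempty open interval of `(0,∞)` and
all unit vectors `ω`, then `f = 0` a.e. -/
theorem stmt3 (f : EuclideanSpace ℝ (Fin 2) → ℂ)
    (hf : Integrable f) (hsupp : HasCompactSupport f)
    (a b : ℝ) (ha : 0 < a) (hab : a < b)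
    (hvan : ∀ s ∈ Ioo a b, ∀ ω : EuclideanSpace ℝ (Fin 2), ‖ω‖ = 1 →
      ∫ x, f x * Complex.exp (-(↑(s * ⟪x, ω⟫) : ℂ)) = 0) :
    f =ᵐ[volume] 0 := by
  refine stmt3_general hf hsupp (isOpen_Ioo.preimage continuous_norm)
    (nonempty_norm_preimage_Ioo ha.le hab)
    (forall_mem_norm_preimage_Ioo_of_forall_smul_unit ha.le fun s hs ω hω ↦ ?_)
  simpa only [laplaceTransform, inner_smul_right, smul_eq_mul, mul_comm] using hvan s hs ω hω
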